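/- Let N ∈ ℕ, let K be a real symmetric positive semidefinite N×N matrix, M a real symmetric positive definite N×N matrix, W a diagonal positive definite N×N matrix, and γ ≥ 1 a constant with xᵀM x ≤ xᵀW x ≤ γ xᵀM x for all x ∈ ℝ^N. Let α, β > 0, a ≤ 0 ≤ b, and y_d, y_r ∈ ℝ^N. Define σ_{[a,b]}(ξ) = Σᵢ max(a ξᵢ, b ξᵢ) and the discretized dual objective Φ_h(λ, p, μ) = ½(K p − M y_d)ᵀ M⁻¹ (K p − M y_d) + (1/(2α))(λ + μ − p)ᵀ M (λ + μ − p) + (M y_r)ᵀ p + σ_{[a,b]}(M μ) − ½ y_dᵀ M y_d for λ ∈ [−β, β]^N (Φ_h = +∞ otherwise). Let t₁ = 1, t_{k+1} = (1 + √(1 + 4 t_k²))/2, β_k = (t_k − 1)/t_{k+1}. Given (λ⁰, p⁰, μ⁰) with λ⁰ ∈ [−β, β]^N and (λ̃¹, p̃¹, μ̃¹) = (λ⁰, p⁰, μ⁰), suppose the iterates satisfy: p̂^k is the unique minimizer of p ↦ ½(K p − M y_d)ᵀ M⁻¹ (K p − M y_d) + (1/(2α))(p − λ̃^k − μ̃^k)ᵀ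 M (p − λ̃^k − μ̃^k) + (M y_r)ᵀ p; λ^k uniquely minimizes over [−β, β]^N the function λ ↦ (1/(2α))(λ − (p̂^k − μ̃^k))ᵀ M (λ − (p̂^k − μ̃^k)) + (1/(2α))(λ − λ̃^k)ᵀ(W − M)(λ − λ̃^k); p^k is the unique minimizer of p ↦ ½(K p − M y_d)ᵀ M⁻¹ (K p − M y_d) + (1/(2α))(p − λ^k − μ̃^k)ᵀ M (p − λ^k − μ̃^k) + (M y_r)ᵀ p; μ^k is the unique minimizer of μ ↦ σ_{[a,b]}(M μ) + (1/(2α))(μ − (p^k − λ^k))ᵀ M (μ − (p^k − λ^k)) + (1/(2α))(μ − μ̃^k)ᵀ(γ M W⁻¹ M − M)(μ − μ̃^k); and (λ̃^{k+1}, p̃^{k+1}, μ̃^{k+1}) = (λ^k, p^k, μ^k) + β_k((λ^k, p^k, μ^k) − (λ^{k−1}, p^{k−1}, μ^{k−1})). If z* = (λ*, p*, μ*) minimizes Φ_h, then for all k ≥ 1, Φ_h(λ^k, p^k, μ^k) − Φ_h(z*) ≤ 4 τ_h/(k+1)², where τ_h = ½‖z⁰ − z*‖²_{S_h} with S_h the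 block-diagonal matrix (1/α)·Diag(M(M + α K M⁻¹ K)⁻¹ M + W − M, 0, γ M W⁻¹ M); moreover the sequence (λ^k, p^k, μ^k) is bounded. -/

import Mathlib

open Matrix

/-- Support function of the box `[a, b]^N` evaluated at `ξ`. -/
def boxSupport {N : ℕ} (a b : ℝ) (ξ : Fin N → ℝ) : ℝ :=
  ∑ i, max (a * ξ i) (b * ξ i)

/-- The discretized dual objective `Φ_h(λ, p, μ)`, restricted to `λ ∈ [−β, β]^N`
(outside, `Φ_h = +∞`, which is encoded by constraining all minimizations in `λ` to the
box). -/
noncomputable def discDualObj {N : ℕ} (K M : Matrix (Fin N) (Fin N) ℝ)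
    (α a b : ℝ) (yd yr : Fin N → ℝ) (lam p mu : Fin N → ℝ) : ℝ :=
  (1 / 2) * ((K *ᵥ p - M *ᵥ yd) ⬝ᵥ (M⁻¹ *ᵥ (K *ᵥ p - M *ᵥ yd)))
    + (1 / (2 * α)) * ((lam + mu - p) ⬝ᵥ (M *ᵥ (lam + mu - p)))
    + (M *ᵥ yr) ⬝ᵥ p + boxSupport a b (M *ᵥ mu)
    - (1 / 2) * (yd ⬝ᵥ (M *ᵥ yd))

/-!
Eliminating `p` exactly turns the sweep `p̂, λ, p` into one minimization over the block `(λ, p)`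
with an extra proximal weight, the sGS weight `M (M + α K M⁻¹ K)⁻¹ M`. An iteration is then a pair
of proximal minimizations, in `(λ, p)` and in `μ`. Their three-point inequalities, the mixed term
being absorbed by `M ≤ γ M W⁻¹ M`, combine into `Φ(zᵏ) - Φ(w) ≤ S(w - z̃ᵏ) - S(w - zᵏ)` for every
feasible `w`, where `S = ½ ‖·‖²_{S_h}`. This is the descent inequality of an accelerated proximal
method, so Nesterov's Lyapunov function
`t_k² (Φ(zᵏ) - Φ(z*)) + S(t_k zᵏ - (t_k - 1) zᵏ⁻¹ - z*)` is at most `S(z⁰ - z*)`, which gives the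
rate. Since `zᵏ` is a convex combination of `zᵏ⁻¹` and `t_k zᵏ - (t_k - 1) zᵏ⁻¹`, also
`S(zᵏ - z*) ≤ S(z⁰ - z*)`. This bounds `λᵏ` and `μᵏ`; the component `pᵏ`, which `S` does not see, is
a continuous function of `λᵏ + μ̃ᵏ`.
-/

open Filter Topology Set

section QuadraticForm

variable {E F X Y V : Type*} [AddCommGroup E] [Module ℝ E] [AddCommGroup F] [Module ℝ F]
  [AddCommGroup X] [Module ℝ X] [AddCommGroup Y] [Module ℝ Y] [AddCommGroup V] [Module ℝ V]

theorem quadraticForm_smul_add_smul (Q : QuadraticForm ℝ E) (x y : E) (a b : ℝ) :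
    Q (a • x + b • y) = a * (a + b) * Q x + b * (a + b) * Q y - a * b * Q (x - y) := by
  have hadd := QuadraticMap.map_add Q (a • x) (b • y)
  have hsub := QuadraticMap.map_add Q x (-y)
  rw [Q.map_smul, Q.map_smul, Q.polar_smul_left, Q.polar_smul_right] at hadd
  rw [Q.map_neg, Q.polar_neg_right, ← sub_eq_add_neg] at hsub
  simp only [smul_eq_mul] at hadd
  linear_combination hadd + a * b * hsub

theorem three_point_inequality {C : Set E} {f : E → ℝ} (hf : ConvexOn ℝ C f)
    (Q : QuadraticForm ℝ F) (L : E →ₗ[ℝ] F) (c : F) {x z : E} (hx : x ∈ C) (hz : z ∈ C)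
    (hmin : IsMinOn (fun y ↦ f y + Q (L y + c)) C x) :
    f x + Q (L x + c) + Q (L (z - x)) ≤ f z + Q (L z + c) := by
  have hsegment : ∀ s ∈ Ioo (0 : ℝ) 1,
      (1 - s) * Q (L (z - x)) ≤ f z + Q (L z + c) - (f x + Q (L x + c)) := by
    rintro s ⟨hs0, hs1⟩
    have hw : (1 - s) • x + s • z ∈ C := hf.1 hx hz (by linarith) hs0.le (by ring)
    have hle := isMinOn_iff.mp hmin _ hw
    have hfw : f ((1 - s) • x + s • z) ≤ (1 - s) • f x + s • f z :=
      hf.2 hx hz (by linarith) hs0.le (by ring)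
    have hLw : L ((1 - s) • x + s • z) + c = (1 - s) • (L x + c) + s • (L z + c) := by
      simp only [map_add, map_smul]
      module
    have hdiff : L x + c - (L z + c) = -L (z - x) := by
      rw [map_sub]
      abel
    simp only [smul_eq_mul] at hfw
    rw [hLw, quadraticForm_smul_add_smul, hdiff, Q.map_neg] at hle
    refine le_of_mul_le_mul_left ?_ hs0
    linarith
  have hlim : Tendsto (fun s : ℝ ↦ (1 - s) * Q (L (z - x))) (𝓝[>] 0) (𝓝 (Q (L (z - x)))) := by
    have hcont : Continuous fun s : ℝ ↦ (1 - s) * Q (L (z - x)) := by fun_prop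
    simpa using (hcont.tendsto 0).mono_left nhdsWithin_le_nhds
  have hle := le_of_tendsto hlim (eventually_of_mem (Ioo_mem_nhdsGT one_pos) hsegment)
  linarith

/- The two three-point inequalities leave the mixed term `Q (ε + δ) - Q ε - Q δ` with
`ε = L (x - x')` and `δ = N (y - yt)`; positivity of `Q` and the majorization absorb it. -/
theorem majorized_twoBlock_step {C : Set X} {D : Set Y} {θ : X → ℝ} {ψ : Y → ℝ}
    (hθ : ConvexOn ℝ C θ) (hψ : ConvexOn ℝ D ψ) (L : X →ₗ[ℝ] V) (N : Y →ₗ[ℝ] V)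
    {Q : QuadraticForm ℝ V} {S : QuadraticForm ℝ X} {T : QuadraticForm ℝ Y}
    (hQ : ∀ v, 0 ≤ Q v) (hS : ∀ v, 0 ≤ S v) (hQT : ∀ v, Q (N v) ≤ T v)
    {xt x' : X} {yt y' : Y} (hx' : x' ∈ C) (hy' : y' ∈ D)
    (hxmin : IsMinOn (fun x ↦ θ x + Q (L x + N yt) + S (x - xt)) C x')
    (hymin : IsMinOn (fun y ↦ ψ y + Q (L x' + N y) + (T (y - yt) - Q (N (y - yt)))) D y')
    {x : X} (hx : x ∈ C) {y : Y} (hy : y ∈ D) :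
    (θ x' + Q (L x' + N y') + ψ y') - (θ x + Q (L x + N y) + ψ y)
      ≤ (S (x - xt) + T (y - yt)) - (S (x - x') + T (y - y')) := by
  have hxthree := three_point_inequality hθ (Q.prod S) (L.prod LinearMap.id) (N yt, -xt) hx' hx
    (by simpa [add_assoc, sub_eq_add_neg] using hxmin)
  have hythree := three_point_inequality hψ (Q.prod (T - Q.comp N)) (N.prod LinearMap.id)
    (L x', -yt) hy' hy (by simpa [add_assoc, sub_eq_add_neg, add_comm (L x')] using hymin)
  simp only [QuadraticMap.prod_apply, _root_.sub_apply, QuadraticMap.comp_apply,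
    LinearMap.prod_apply, Function.prod, LinearMap.id_apply, Prod.mk_add_mk, ← sub_eq_add_neg,
    add_comm (N _) (L x')] at hxthree hythree
  have hmixed := Q.map_add_add_add_map (L x' + N yt) (L (x - x')) (N (y - yt))
  rw [show L x' + N yt + L (x - x') + N (y - yt) = L x + N y by simp only [map_sub]; abel,
    show L x' + N yt + L (x - x') = L x + N yt by rw [map_sub]; abel,
    show N (y - yt) + (L x' + N yt) = L x' + N y by rw [map_sub]; abel] at hmixed
  linarith [hQ (L (x - x') + N (y - yt)), hS (x' - xt), hQT (y' - yt)]

theorem convexOn_quadraticForm {Q : QuadraticForm ℝ E} (hQ : ∀ v, 0 ≤ Q v) :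
    ConvexOn ℝ univ Q := by
  refine ⟨convex_univ, fun x _ y _ a b ha hb hab ↦ ?_⟩
  rw [quadraticForm_smul_add_smul, hab, smul_eq_mul, smul_eq_mul]
  linarith [mul_nonneg (mul_nonneg ha hb) (hQ (x - y))]

end QuadraticForm

section FiniteDimensional

variable {E : Type*} [NormedAddCommGroup E] [NormedSpace ℝ E] [FiniteDimensional ℝ E]

theorem continuous_quadraticForm (Q : QuadraticForm ℝ E) : Continuous Q := by
  let B := LinearMap.toContinuousBilinearMap (QuadraticMap.associated Q)
  have hB : ⇑Q = fun x ↦ B x x :=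
    funext fun x ↦ (QuadraticMap.associated_eq_self_apply ℝ Q x).symm
  rw [hB]
  fun_prop

theorem exists_pos_mul_sq_norm_le {Q : QuadraticForm ℝ E} (hQ : Q.PosDef) :
    ∃ m > 0, ∀ x, m * ‖x‖ ^ 2 ≤ Q x := by
  obtain ⟨m, hm, hsphere⟩ := (isCompact_sphere (0 : E) 1).exists_forall_le'
    (continuous_quadraticForm Q).continuousOn
    (fun x hx ↦ hQ x (ne_zero_of_mem_unit_sphere ⟨x, hx⟩))
  refine ⟨m, hm, fun x ↦ ?_⟩
  rcases eq_or_ne x 0 with rfl | hx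
  · simp
  · have hnorm : ‖x‖ ≠ 0 := norm_ne_zero_iff.mpr hx
    have hunit : ‖x‖⁻¹ • x ∈ Metric.sphere (0 : E) 1 := by
      simp [norm_smul, hnorm]
    have hle := hsphere _ hunit
    rw [Q.map_smul, smul_eq_mul] at hle
    calc m * ‖x‖ ^ 2 ≤ ‖x‖⁻¹ * ‖x‖⁻¹ * Q x * ‖x‖ ^ 2 := by gcongr
      _ = Q x := by field_simp

theorem isBounded_quadraticForm_sublevel {Q : QuadraticForm ℝ E} (hQ : Q.PosDef) (u : E) (c : ℝ) :
    Bornology.IsBounded {x | Q (x - u) ≤ c} := by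
  obtain ⟨m, hm, hle⟩ := exists_pos_mul_sq_norm_le hQ
  refine Metric.isBounded_closedBall (x := u) (r := √(c / m)) |>.subset fun x hx ↦ ?_
  rw [mem_closedBall_iff_norm]
  refine Real.le_sqrt_of_sq_le ?_
  rw [le_div_iff₀' hm]
  exact (hle _).trans hx

end FiniteDimensional

/-- The Nesterov momentum parameters `t₁ = 1`, `t_{k+1} = (1 + √(1 + 4 t_k²)) / 2`; the value
`t 0` is irrelevant. -/
structure IsNesterovSeq (t : ℕ → ℝ) : Prop where
  one : t 1 = 1
  succ : ∀ k ≥ 1, t (k + 1) = (1 + √(1 + 4 * t k ^ 2)) / 2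

namespace IsNesterovSeq

variable {t : ℕ → ℝ}

theorem mul_sub_one (ht : IsNesterovSeq t) {k : ℕ} (hk : 1 ≤ k) :
    t (k + 1) * (t (k + 1) - 1) = t k ^ 2 := by
  have hsq := Real.sq_sqrt (show 0 ≤ 1 + 4 * t k ^ 2 by positivity)
  rw [ht.succ k hk]
  linear_combination hsq / 4

theorem add_one_div_two_le (ht : IsNesterovSeq t) {k : ℕ} (hk : 1 ≤ k) :
    ((k : ℝ) + 1) / 2 ≤ t k := by
  induction k, hk using Nat.le_induction with
  | base => norm_num [ht.one]
  | succ k hk ih =>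
    have hsqrt : 2 * t k ≤ √(1 + 4 * t k ^ 2) := Real.le_sqrt_of_sq_le (by linarith)
    rw [ht.succ k hk]
    push_cast
    linarith

theorem one_le (ht : IsNesterovSeq t) {k : ℕ} (hk : 1 ≤ k) : 1 ≤ t k := by
  have hk' : (1 : ℝ) ≤ k := by exact_mod_cast hk
  linarith [ht.add_one_div_two_le hk]

theorem abs_extrapolation_le_one (ht : IsNesterovSeq t) {k : ℕ} (hk : 1 ≤ k) :
    |(t k - 1) / t (k + 1)| ≤ 1 := by
  have hsqrt : 2 * t k ≤ √(1 + 4 * t k ^ 2) := Real.le_sqrt_of_sq_le (by linarith)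
  have hk1 := ht.one_le hk
  have hsucc := ht.succ k hk
  rw [abs_of_nonneg (div_nonneg (by linarith) (by linarith)), div_le_one (by linarith)]
  linarith

end IsNesterovSeq

/-- `y` is the sequence of extrapolated points of the iterates `x` with momentum parameters `t`.
The iterates start at `x 0`, the extrapolated points at `y 1`, so that `y k` is the point from which
`x k` is computed; `y 0` is irrelevant. -/
structure IsExtrapolated {E : Type*} [AddCommGroup E] [Module ℝ E] (t : ℕ → ℝ) (x y : ℕ → E) :
    Prop where
  one : y 1 = x 0
  succ : ∀ k ≥ 1, y (k + 1) = x k + ((t k - 1) / t (k + 1)) • (x k - x (k - 1))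

namespace IsExtrapolated

theorem prodMk {E F : Type*} [AddCommGroup E] [Module ℝ E] [AddCommGroup F] [Module ℝ F]
    {t : ℕ → ℝ} {x y : ℕ → E} {x' y' : ℕ → F} (h : IsExtrapolated t x y)
    (h' : IsExtrapolated t x' y') :
    IsExtrapolated t (fun k ↦ (x k, x' k)) (fun k ↦ (y k, y' k)) where
  one := Prod.ext h.one h'.one
  succ k hk := Prod.ext (h.succ k hk) (h'.succ k hk)

theorem norm_le {E : Type*} [NormedAddCommGroup E] [NormedSpace ℝ E] {t : ℕ → ℝ} {x y : ℕ → E}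
    (h : IsExtrapolated t x y) (ht : IsNesterovSeq t) {R : ℝ} (hR : ∀ k, ‖x k‖ ≤ R) {k : ℕ}
    (hk : 1 ≤ k) : ‖y k‖ ≤ 3 * R := by
  have hR0 : 0 ≤ R := (norm_nonneg _).trans (hR 0)
  induction k, hk using Nat.le_induction with
  | base => linarith [h.one ▸ hR 0]
  | succ k hk _ =>
    calc ‖y (k + 1)‖
        ≤ ‖x k‖ + ‖(t k - 1) / t (k + 1)‖ * ‖x k - x (k - 1)‖ := by
          rw [h.succ k hk, ← norm_smul]
          exact norm_add_le _ _
      _ ≤ R + 1 * (R + R) := by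
          gcongr
          · exact hR k
          · exact ht.abs_extrapolation_le_one hk
          · exact (norm_sub_le _ _).trans (add_le_add (hR _) (hR _))
      _ = 3 * R := by ring

end IsExtrapolated

section Acceleration

variable {E : Type*} [AddCommGroup E] [Module ℝ E] {t : ℕ → ℝ} {x y : ℕ → E} {C : Set E}
  {Φ : E → ℝ} {Q : QuadraticForm ℝ E} {z : E}

theorem nesterov_lyapunov_le (ht : IsNesterovSeq t) (hy : IsExtrapolated t x y)
    (hxC : ∀ k ≥ 1, x k ∈ C)
    (hstep : ∀ k ≥ 1, ∀ w ∈ C, Φ (x k) - Φ w ≤ Q (w - y k) - Q (w - x k))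
    (hz : z ∈ C) {k : ℕ} (hk : 1 ≤ k) :
    t k ^ 2 * (Φ (x k) - Φ z) + Q (t k • x k - (t k - 1) • x (k - 1) - z) ≤ Q (x 0 - z) := by
  have stewart : ∀ (u v : E) (s : ℝ), Q (s • v - (s - 1) • u - z)
      = s * (s - 1) * Q (u - v) + s * Q (z - v) - (s - 1) * Q (u - z) := by
    intro u v s
    have h := quadraticForm_smul_add_smul Q (u - v) (z - v) (s - 1) 1
    rw [show (s - 1) • (u - v) + (1 : ℝ) • (z - v) = -(s • v - (s - 1) • u - z) by module,
      Q.map_neg, sub_sub_sub_cancel_right] at h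
    linear_combination h
  induction k, hk using Nat.le_induction with
  | base =>
    have h := hstep 1 le_rfl z hz
    rw [hy.one, Q.map_sub z, Q.map_sub z] at h
    simp only [ht.one, one_pow, one_mul, one_smul, sub_self, zero_smul, sub_zero]
    linarith
  | succ k hk ih =>
    have hτ := ht.one_le (Nat.le_add_left 1 k)
    have hprev := mul_le_mul_of_nonneg_left (hstep (k + 1) (by lia) (x k) (hxC k hk))
      (mul_nonneg (zero_le_one.trans hτ) (sub_nonneg.mpr hτ))
    have hcomp := mul_le_mul_of_nonneg_left (hstep (k + 1) (by lia) z hz) (zero_le_one.trans hτ)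
    have hmomentum : t (k + 1) • y (k + 1) - (t (k + 1) - 1) • x k
        = t k • x k - (t k - 1) • x (k - 1) := by
      have hτ0 : t (k + 1) ≠ 0 := by positivity
      rw [hy.succ k hk, smul_add, smul_smul, mul_div_cancel₀ _ hτ0]
      module
    rw [← hmomentum, ← ht.mul_sub_one hk, stewart] at ih
    rw [Nat.add_sub_cancel, stewart]
    linarith

theorem nesterov_rate (ht : IsNesterovSeq t) (hy : IsExtrapolated t x y)
    (hQ : ∀ v, 0 ≤ Q v) (hxC : ∀ k ≥ 1, x k ∈ C)
    (hstep : ∀ k ≥ 1, ∀ w ∈ C, Φ (x k) - Φ w ≤ Q (w - y k) - Q (w - x k))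
    (hz : z ∈ C) {k : ℕ} (hk : 1 ≤ k) :
    Φ (x k) - Φ z ≤ 4 * Q (x 0 - z) / ((k : ℝ) + 1) ^ 2 := by
  rw [le_div_iff₀ (by positivity)]
  rcases le_total (Φ (x k) - Φ z) 0 with hgap | hgap
  · exact (mul_nonpos_of_nonpos_of_nonneg hgap (sq_nonneg _)).trans
      (mul_nonneg zero_le_four (hQ _))
  · have hlyap := nesterov_lyapunov_le ht hy hxC hstep hz hk
    have hsq : (((k : ℝ) + 1) / 2) ^ 2 ≤ t k ^ 2 := by
      gcongr
      exact ht.add_one_div_two_le hk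
    linarith [mul_le_mul_of_nonneg_right hsq hgap, hQ (t k • x k - (t k - 1) • x (k - 1) - z)]

theorem nesterov_dist_le (ht : IsNesterovSeq t) (hy : IsExtrapolated t x y)
    (hQ : ∀ v, 0 ≤ Q v) (hxC : ∀ k ≥ 1, x k ∈ C)
    (hstep : ∀ k ≥ 1, ∀ w ∈ C, Φ (x k) - Φ w ≤ Q (w - y k) - Q (w - x k))
    (hz : z ∈ C) (hmin : IsMinOn Φ C z) (k : ℕ) : Q (x k - z) ≤ Q (x 0 - z) := by
  induction k with
  | zero => rfl
  | succ k ih =>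
    have hτ := ht.one_le (Nat.le_add_left 1 k)
    set s := (t (k + 1))⁻¹
    have hs0 : 0 ≤ s := inv_nonneg.mpr (zero_le_one.trans hτ)
    have hs1 : s ≤ 1 := inv_le_one_of_one_le₀ hτ
    set u := t (k + 1) • x (k + 1) - (t (k + 1) - 1) • x k - z with hu
    have hlyap : Q u ≤ Q (x 0 - z) := by
      have h := nesterov_lyapunov_le ht hy hxC hstep hz (Nat.le_add_left 1 k)
      have hgap := sub_nonneg.mpr (isMinOn_iff.mp hmin _ (hxC (k + 1) (by lia)))
      exact (le_add_of_nonneg_left (by positivity)).trans h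
    have hcomb : x (k + 1) - z = (1 - s) • (x k - z) + s • u := by
      have hst : s * t (k + 1) = 1 := inv_mul_cancel₀ (by positivity)
      rw [hu]
      linear_combination (norm := module) hst • (x k - x (k + 1))
    rw [hcomb]
    refine ((convexOn_quadraticForm hQ).le_max_of_mem_segment (mem_univ _) (mem_univ _) ⟨1 - s, s,
      sub_nonneg.mpr hs1, hs0, sub_add_cancel 1 s, rfl⟩).trans (max_le ih hlyap)

end Acceleration

section MatrixForms

variable {n : Type*} [Fintype n] {M : Matrix n n ℝ}

theorem posDef_dotProduct_mulVec_nonneg (hM : M.PosDef) (x : n → ℝ) : 0 ≤ x ⬝ᵥ (M *ᵥ x) := by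
  simpa using hM.posSemidef.dotProduct_mulVec_nonneg x

theorem posDef_mulVec_dotProduct (hM : M.PosDef) (x y : n → ℝ) :
    (M *ᵥ x) ⬝ᵥ y = x ⬝ᵥ (M *ᵥ y) := by
  have hsymm : Mᵀ = M := by simpa using hM.isHermitian.eq
  rw [dotProduct_mulVec, ← mulVec_transpose, hsymm]

theorem dotProduct_mul_mul_mulVec (hM : M.PosDef) (A : Matrix n n ℝ) (x : n → ℝ) :
    x ⬝ᵥ ((M * A * M) *ᵥ x) = (M *ᵥ x) ⬝ᵥ (A *ᵥ (M *ᵥ x)) := by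
  rw [posDef_mulVec_dotProduct hM, mulVec_mulVec, mulVec_mulVec, Matrix.mul_assoc]

variable [DecidableEq n] {W : Matrix n n ℝ}

/-- The quadratic form `x ↦ xᵀ A x / (2α)` that penalizes deviations in the method. -/
noncomputable def penaltyForm (A : Matrix n n ℝ) (α : ℝ) : QuadraticForm ℝ (n → ℝ) :=
  (1 / (2 * α)) • A.toQuadraticForm'

theorem penaltyForm_apply (A : Matrix n n ℝ) (α : ℝ) (x : n → ℝ) :
    penaltyForm A α x = (1 / (2 * α)) * (x ⬝ᵥ (A *ᵥ x)) := by
  simp [penaltyForm, Matrix.toQuadraticForm', Matrix.toLinearMap₂'_apply']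

theorem penaltyForm_add (A B : Matrix n n ℝ) (α : ℝ) (x : n → ℝ) :
    penaltyForm (A + B) α x = penaltyForm A α x + penaltyForm B α x := by
  simp only [penaltyForm_apply, add_mulVec, dotProduct_add, mul_add]

theorem penaltyForm_sub (A B : Matrix n n ℝ) (α : ℝ) (x : n → ℝ) :
    penaltyForm (A - B) α x = penaltyForm A α x - penaltyForm B α x := by
  simp only [penaltyForm_apply, sub_mulVec, dotProduct_sub, mul_sub]

theorem penaltyForm_mono {A B : Matrix n n ℝ} {α : ℝ} (hα : 0 < α) {x : n → ℝ}
    (hAB : x ⬝ᵥ (A *ᵥ x) ≤ x ⬝ᵥ (B *ᵥ x)) : penaltyForm A α x ≤ penaltyForm B α x := by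
  rw [penaltyForm_apply, penaltyForm_apply]
  gcongr

theorem penaltyForm_mul_mul (hM : M.PosDef) (A : Matrix n n ℝ) (α : ℝ) (x : n → ℝ) :
    penaltyForm (M * A * M) α x = penaltyForm A α (M *ᵥ x) := by
  rw [penaltyForm_apply, penaltyForm_apply, dotProduct_mul_mul_mulVec hM]

theorem penaltyForm_posDef (hM : M.PosDef) {α : ℝ} (hα : 0 < α) : (penaltyForm M α).PosDef :=
  hM.toQuadraticForm'.smul (by positivity)

theorem posDef_inv_mulVec_mulVec (hM : M.PosDef) (x : n → ℝ) : M⁻¹ *ᵥ (M *ᵥ x) = x := by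
  rw [mulVec_mulVec, nonsing_inv_mul _ hM.det_pos.ne'.isUnit, one_mulVec]

theorem posDef_mulVec_inv_mulVec (hM : M.PosDef) (x : n → ℝ) : M *ᵥ (M⁻¹ *ᵥ x) = x := by
  rw [mulVec_mulVec, mul_nonsing_inv _ hM.det_pos.ne'.isUnit, one_mulVec]

theorem posDef_complete_square (hM : M.PosDef) (w x : n → ℝ) :
    x ⬝ᵥ (M *ᵥ x) - 2 * (w ⬝ᵥ x)
      = (M *ᵥ x - w) ⬝ᵥ (M⁻¹ *ᵥ (M *ᵥ x - w)) - w ⬝ᵥ (M⁻¹ *ᵥ w) := by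
  have hcross : (M *ᵥ x) ⬝ᵥ (M⁻¹ *ᵥ w) = w ⬝ᵥ x := by
    rw [posDef_mulVec_dotProduct hM, posDef_mulVec_inv_mulVec hM, dotProduct_comm]
  simp only [mulVec_sub, dotProduct_sub, sub_dotProduct, posDef_inv_mulVec_mulVec hM, hcross,
    dotProduct_comm (M *ᵥ x) x]
  ring

/-- The majorization matrix `γ M W⁻¹ M` of the `μ`-block. -/
noncomputable def muWeight (M W : Matrix n n ℝ) (γ : ℝ) : Matrix n n ℝ :=
  γ • (M * W⁻¹ * M)

theorem dotProduct_mulVec_le_muWeight (hM : M.PosDef) (hW : W.PosDef) {γ : ℝ} (hγ : 0 < γ)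
    (hWM : ∀ x, x ⬝ᵥ (W *ᵥ x) ≤ γ * (x ⬝ᵥ (M *ᵥ x))) (x : n → ℝ) :
    x ⬝ᵥ (M *ᵥ x) ≤ x ⬝ᵥ (muWeight M W γ *ᵥ x) := by
  have hsquare := posDef_complete_square hW (γ • (M *ᵥ x)) x
  have hnonneg := posDef_dotProduct_mulVec_nonneg hW.inv (W *ᵥ x - γ • (M *ᵥ x))
  rw [muWeight, smul_mulVec, dotProduct_smul, smul_eq_mul, dotProduct_mul_mul_mulVec hM]
  simp only [mulVec_smul, dotProduct_smul, smul_dotProduct, smul_eq_mul,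
    dotProduct_comm (M *ᵥ x) x] at hsquare
  refine le_of_mul_le_mul_left ?_ hγ
  linarith [hWM x]

theorem muWeight_penaltyForm_posDef (hM : M.PosDef) (hW : W.PosDef) {γ α : ℝ} (hγ : 0 < γ)
    (hα : 0 < α) (hWM : ∀ x, x ⬝ᵥ (W *ᵥ x) ≤ γ * (x ⬝ᵥ (M *ᵥ x))) :
    (penaltyForm (muWeight M W γ) α).PosDef := fun x hx ↦
  (penaltyForm_posDef hM hα x hx).trans_le
    (penaltyForm_mono hα (dotProduct_mulVec_le_muWeight hM hW hγ hWM x))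

end MatrixForms

section StateSubproblem

variable {n : Type*} [Fintype n] [DecidableEq n] {K M W : Matrix n n ℝ} {α : ℝ} {yd yr : n → ℝ}

/-- The part of the dual objective `Φ_h` that depends on the state variable `p` alone. -/
noncomputable def stateObj (K M : Matrix n n ℝ) (yd yr p : n → ℝ) : ℝ :=
  (1 / 2) * ((K *ᵥ p - M *ᵥ yd) ⬝ᵥ (M⁻¹ *ᵥ (K *ᵥ p - M *ᵥ yd))) + (M *ᵥ yr) ⬝ᵥ p

/-- The objective of the two `p`-subproblems, where `v` stands for the current `λ + μ`. -/
noncomputable def stateSub (K M : Matrix n n ℝ) (α : ℝ) (yd yr v p : n → ℝ) : ℝ :=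
  stateObj K M yd yr p + penaltyForm M α (p - v)

/-- The matrix `M + α Kᵀ M⁻¹ K` of the optimality system of the `p`-subproblem. -/
noncomputable def stateMatrix (K M : Matrix n n ℝ) (α : ℝ) : Matrix n n ℝ :=
  M + α • (Kᵀ * M⁻¹ * K)

/-- The right-hand side of the optimality system of the `p`-subproblem. -/
noncomputable def stateRhs (K M : Matrix n n ℝ) (α : ℝ) (yd yr v : n → ℝ) : n → ℝ :=
  M *ᵥ v + α • (Kᵀ *ᵥ yd - M *ᵥ yr)

/-- The majorization matrix `M (M + α Kᵀ M⁻¹ K)⁻¹ M + W - M` of the `λ`-block, left over after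
`p` has been eliminated from the subproblem of the block `(λ, p)`. -/
noncomputable def lamWeight (K M W : Matrix n n ℝ) (α : ℝ) : Matrix n n ℝ :=
  M * (stateMatrix K M α)⁻¹ * M + W - M

theorem stateMatrix_posDef (hM : M.PosDef) (hα : 0 < α) : (stateMatrix K M α).PosDef := by
  have h := hM.inv.posSemidef.conjTranspose_mul_mul_same K
  rw [conjTranspose_eq_transpose_of_trivial] at h
  exact hM.add_posSemidef (h.smul hα.le)

theorem lamWeight_penaltyForm_posDef (hM : M.PosDef) (hα : 0 < α)
    (hMW : ∀ x, x ⬝ᵥ (M *ᵥ x) ≤ x ⬝ᵥ (W *ᵥ x)) : (penaltyForm (lamWeight K M W α) α).PosDef := by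
  intro x hx
  have hMx : M *ᵥ x ≠ 0 := fun h ↦ hx (by
    rw [← posDef_inv_mulVec_mulVec hM x, h, mulVec_zero])
  have hpos := penaltyForm_posDef (stateMatrix_posDef (K := K) hM hα).inv hα _ hMx
  have hle : penaltyForm M α x ≤ penaltyForm W α x := penaltyForm_mono hα (hMW x)
  rw [lamWeight, penaltyForm_sub, penaltyForm_add, penaltyForm_mul_mul hM]
  linarith

theorem stateSub_eq (hM : M.PosDef) (hα : 0 < α) (v p : n → ℝ) :
    stateSub K M α yd yr v p
      = penaltyForm (stateMatrix K M α)⁻¹ α (stateMatrix K M α *ᵥ p - stateRhs K M α yd yr v)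
        + stateSub K M α yd yr v ((stateMatrix K M α)⁻¹ *ᵥ stateRhs K M α yd yr v) := by
  have hA := stateMatrix_posDef (K := K) hM hα
  have hexpand : ∀ q, stateSub K M α yd yr v q
      = (1 / (2 * α)) * (q ⬝ᵥ (stateMatrix K M α *ᵥ q) - 2 * (stateRhs K M α yd yr v ⬝ᵥ q)
          + v ⬝ᵥ (M *ᵥ v)) + (1 / 2) * ((M *ᵥ yd) ⬝ᵥ yd) := by
    intro q
    have hKq : q ⬝ᵥ ((Kᵀ * M⁻¹ * K) *ᵥ q) = (K *ᵥ q) ⬝ᵥ (M⁻¹ *ᵥ (K *ᵥ q)) := by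
      rw [← mulVec_mulVec, ← mulVec_mulVec, dotProduct_transpose_mulVec, dotProduct_comm]
    have hyd : (K *ᵥ q) ⬝ᵥ yd = (Kᵀ *ᵥ yd) ⬝ᵥ q := by
      rw [dotProduct_comm, ← dotProduct_transpose_mulVec, dotProduct_comm]
    have hcross : (M *ᵥ yd) ⬝ᵥ (M⁻¹ *ᵥ (K *ᵥ q)) = (Kᵀ *ᵥ yd) ⬝ᵥ q := by
      rw [posDef_mulVec_dotProduct hM, posDef_mulVec_inv_mulVec hM, dotProduct_comm, hyd]
    simp only [stateSub, stateObj, penaltyForm_apply, stateMatrix, stateRhs, mulVec_sub,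
      dotProduct_sub, sub_dotProduct, add_mulVec, dotProduct_add, add_dotProduct, smul_mulVec,
      dotProduct_smul, smul_dotProduct, smul_eq_mul, posDef_inv_mulVec_mulVec hM, hKq, hyd, hcross,
      ← posDef_mulVec_dotProduct hM v q, dotProduct_comm q (M *ᵥ v)]
    field_simp
    ring
  rw [hexpand, hexpand, posDef_complete_square hA, posDef_complete_square hA,
    posDef_mulVec_inv_mulVec hA, sub_self, zero_dotProduct, penaltyForm_apply]
  ring

theorem stateMatrix_mulVec_eq_of_isMinOn (hM : M.PosDef) (hα : 0 < α) {v p : n → ℝ}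
    (hp : IsMinOn (stateSub K M α yd yr v) univ p) :
    stateMatrix K M α *ᵥ p = stateRhs K M α yd yr v := by
  by_contra hne
  have hA := stateMatrix_posDef (K := K) hM hα
  have hle := isMinOn_univ_iff.mp hp ((stateMatrix K M α)⁻¹ *ᵥ stateRhs K M α yd yr v)
  rw [stateSub_eq hM hα] at hle
  exact hle.not_gt (lt_add_of_pos_left _ (penaltyForm_posDef hA.inv hα _ (sub_ne_zero.mpr hne)))

theorem isMinOn_stateSub (hM : M.PosDef) (hα : 0 < α) (v : n → ℝ) :
    IsMinOn (stateSub K M α yd yr v) univ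
      ((stateMatrix K M α)⁻¹ *ᵥ stateRhs K M α yd yr v) := by
  refine isMinOn_univ_iff.mpr fun p ↦ ?_
  rw [stateSub_eq hM hα v p]
  exact le_add_of_nonneg_left
    ((penaltyForm_posDef (stateMatrix_posDef hM hα).inv hα).nonneg _)

theorem stateSub_eq_of_isMinOn (hM : M.PosDef) (hα : 0 < α) {v w p q : n → ℝ}
    (hp : IsMinOn (stateSub K M α yd yr v) univ p)
    (hq : IsMinOn (stateSub K M α yd yr w) univ q) :
    stateSub K M α yd yr w p = stateSub K M α yd yr w q
      + penaltyForm (M * (stateMatrix K M α)⁻¹ * M) α (w - v) := by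
  have hrhs : stateRhs K M α yd yr v - stateRhs K M α yd yr w = -(M *ᵥ (w - v)) := by
    rw [stateRhs, stateRhs, mulVec_sub]
    abel
  rw [stateSub_eq hM hα w p, stateMatrix_mulVec_eq_of_isMinOn hM hα hp, hrhs,
    ← stateMatrix_mulVec_eq_of_isMinOn hM hα hq,
    posDef_inv_mulVec_mulVec (stateMatrix_posDef hM hα), QuadraticMap.map_neg,
    penaltyForm_mul_mul hM, add_comm]

theorem exists_norm_le_of_isMinOn_stateSub (hM : M.PosDef) (hα : 0 < α) (r : ℝ) :
    ∃ R, ∀ v, ‖v‖ ≤ r → ∀ p, IsMinOn (stateSub K M α yd yr v) univ p → ‖p‖ ≤ R := by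
  have hcont : Continuous fun v ↦ (stateMatrix K M α)⁻¹ *ᵥ stateRhs K M α yd yr v := by
    unfold stateRhs
    fun_prop
  obtain ⟨R, hR⟩ := ((isCompact_closedBall (0 : n → ℝ) r).image hcont).isBounded.exists_norm_le
  refine ⟨R, fun v hv p hp ↦ hR p ⟨v, mem_closedBall_zero_iff.mpr hv, ?_⟩⟩
  simp only [← stateMatrix_mulVec_eq_of_isMinOn hM hα hp,
    posDef_inv_mulVec_mulVec (stateMatrix_posDef hM hα)]

theorem convexOn_stateObj (hM : M.PosDef) : ConvexOn ℝ univ (stateObj K M yd yr) := by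
  have hinv := penaltyForm_posDef hM.inv one_pos
  have hquad := (convexOn_quadraticForm hinv.nonneg).comp_affineMap
    (K.mulVecLin.toAffineMap - AffineMap.const ℝ _ (M *ᵥ yd))
  have hlin := (dotProductBilin ℝ ℝ (M *ᵥ yr)).convexOn (s := univ) convex_univ
  refine (hquad.add hlin).congr fun p _ ↦ ?_
  simp [stateObj, penaltyForm_apply]

end StateSubproblem

theorem convexOn_boxSupport {N : ℕ} (a b : ℝ) :
    ConvexOn ℝ univ (boxSupport a b : (Fin N → ℝ) → ℝ) := by
  refine ⟨convex_univ, fun x _ y _ r s hr hs _ ↦ ?_⟩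
  simp only [boxSupport, smul_eq_mul, Finset.mul_sum, ← Finset.sum_add_distrib]
  refine Finset.sum_le_sum fun i _ ↦ max_le ?_ ?_
  · calc a * (r • x + s • y) i = r * (a * x i) + s * (a * y i) := by
          simp only [Pi.add_apply, Pi.smul_apply, smul_eq_mul]
          ring
      _ ≤ _ := by gcongr <;> exact le_max_left _ _
  · calc b * (r • x + s • y) i = r * (b * x i) + s * (b * y i) := by
          simp only [Pi.add_apply, Pi.smul_apply, smul_eq_mul]
          ring
      _ ≤ _ := by gcongr <;> exact le_max_right _ _

section SGSStep

variable {N : ℕ} {K M W : Matrix (Fin N) (Fin N) ℝ} {γ α a b : ℝ} {yd yr : Fin N → ℝ}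
  {C : Set (Fin N → ℝ)} {lt mt ph l p m : Fin N → ℝ}

/-- One iteration of the sGS-majorized ABCD method over the feasible set `C` of `λ`: from the
extrapolated points `lt`, `mt` it computes the predictor `ph` and the new iterate `(l, p, m)`. -/
structure IsSGSStep (K M W : Matrix (Fin N) (Fin N) ℝ) (γ α a b : ℝ) (yd yr : Fin N → ℝ)
    (C : Set (Fin N → ℝ)) (lt mt ph l p m : Fin N → ℝ) : Prop where
  predictor : IsMinOn (stateSub K M α yd yr (lt + mt)) univ ph
  lam_mem : l ∈ C
  lam : IsMinOn (fun l ↦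
    penaltyForm M α (l - (ph - mt)) + penaltyForm (W - M) α (l - lt)) C l
  state : IsMinOn (stateSub K M α yd yr (l + mt)) univ p
  mu : IsMinOn (fun m ↦
    boxSupport a b (M *ᵥ m) + penaltyForm M α (m - (p - l))
      + penaltyForm (muWeight M W γ - M) α (m - mt)) univ m

/-- The quadratic form `½ ‖(λ, p, μ)‖²` of the block-diagonal matrix `S_h`, whose `p`-block
vanishes. -/
noncomputable def metricForm (K M W : Matrix (Fin N) (Fin N) ℝ) (γ α : ℝ) :
    QuadraticForm ℝ (((Fin N → ℝ) × (Fin N → ℝ)) × (Fin N → ℝ)) :=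
  ((penaltyForm (lamWeight K M W α) α).comp (LinearMap.fst ℝ _ _)).prod
    (penaltyForm (muWeight M W γ) α)

theorem discDualObj_eq (l p m : Fin N → ℝ) :
    discDualObj K M α a b yd yr l p m
      = stateObj K M yd yr p + penaltyForm M α (l - p + m) + boxSupport a b (M *ᵥ m)
        - (1 / 2) * (yd ⬝ᵥ (M *ᵥ yd)) := by
  rw [discDualObj, stateObj, penaltyForm_apply, show l - p + m = l + m - p by abel]
  ring

theorem IsSGSStep.isMinOn_lam_state (h : IsSGSStep K M W γ α a b yd yr C lt mt ph l p m)
    (hM : M.PosDef) (hα : 0 < α) :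
    IsMinOn (fun x : (Fin N → ℝ) × (Fin N → ℝ) ↦ stateSub K M α yd yr (x.1 + mt) x.2
      + penaltyForm (lamWeight K M W α) α (x.1 - lt)) (C ×ˢ univ) (l, p) := by
  have helim : ∀ l' q, IsMinOn (stateSub K M α yd yr (l' + mt)) univ q →
      stateSub K M α yd yr (l' + mt) q + penaltyForm (lamWeight K M W α) α (l' - lt)
        = penaltyForm M α (l' - (ph - mt)) + penaltyForm (W - M) α (l' - lt)
          + stateObj K M yd yr ph := by
    intro l' q hq
    have heq := stateSub_eq_of_isMinOn hM hα h.predictor hq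
    rw [stateSub, ← sub_sub, sub_right_comm, QuadraticMap.map_sub,
      add_sub_add_right_eq_sub] at heq
    rw [lamWeight, add_sub_assoc, penaltyForm_add]
    linarith
  refine isMinOn_iff.mpr ?_
  rintro ⟨l', q⟩ ⟨hl', -⟩
  have hq' := isMinOn_stateSub (K := K) (yd := yd) (yr := yr) hM hα (l' + mt)
  have hlam := isMinOn_iff.mp h.lam l' hl'
  have hle := isMinOn_univ_iff.mp hq' q
  linarith [helim l p h.state, helim l' _ hq']

/-- The dual objective as a function of the blocks `(λ, p)` and `μ`. -/
noncomputable def blockObj (K M : Matrix (Fin N) (Fin N) ℝ) (α a b : ℝ) (yd yr : Fin N → ℝ)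
    (z : ((Fin N → ℝ) × (Fin N → ℝ)) × (Fin N → ℝ)) : ℝ :=
  discDualObj K M α a b yd yr z.1.1 z.1.2 z.2

theorem IsSGSStep.blockObj_sub_le (h : IsSGSStep K M W γ α a b yd yr C lt mt ph l p m)
    (hM : M.PosDef) (hW : W.PosDef) (hγ : 0 < γ) (hα : 0 < α) (hC : Convex ℝ C)
    (hMW : ∀ x, x ⬝ᵥ (M *ᵥ x) ≤ x ⬝ᵥ (W *ᵥ x))
    (hWM : ∀ x, x ⬝ᵥ (W *ᵥ x) ≤ γ * (x ⬝ᵥ (M *ᵥ x))) (pt : Fin N → ℝ)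
    {z : ((Fin N → ℝ) × (Fin N → ℝ)) × (Fin N → ℝ)} (hz : z.1.1 ∈ C) :
    blockObj K M α a b yd yr ((l, p), m) - blockObj K M α a b yd yr z
      ≤ metricForm K M W γ α (z - ((lt, pt), mt)) - metricForm K M W γ α (z - ((l, p), m)) := by
  have hθ : ConvexOn ℝ (C ×ˢ univ) fun x : (Fin N → ℝ) × (Fin N → ℝ) ↦ stateObj K M yd yr x.2 :=
    ((convexOn_stateObj hM).comp_linearMap (LinearMap.snd ℝ _ _)).subset (subset_univ _)
      (hC.prod convex_univ)
  have hψ := (convexOn_boxSupport a b).comp_linearMap M.mulVecLin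
  have hblock := majorized_twoBlock_step (Q := penaltyForm M α)
    (S := (penaltyForm (lamWeight K M W α) α).comp (LinearMap.fst ℝ _ _))
    (T := penaltyForm (muWeight M W γ) α)
    (xt := (lt, pt)) (x' := (l, p)) (x := z.1) (yt := mt) (y' := m) (y := z.2) hθ hψ
    (LinearMap.fst ℝ (Fin N → ℝ) (Fin N → ℝ) - LinearMap.snd ℝ _ _) LinearMap.id
    (penaltyForm_posDef hM hα).nonneg
    (fun x ↦ (lamWeight_penaltyForm_posDef hM hα hMW).nonneg x.1)
    (fun x ↦ penaltyForm_mono hα (dotProduct_mulVec_le_muWeight hM hW hγ hWM x))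
    ⟨h.lam_mem, mem_univ _⟩ (mem_univ _) ?_ ?_ ⟨hz, mem_univ _⟩ (mem_univ _)
  · rw [blockObj, blockObj, discDualObj_eq, discDualObj_eq]
    simp only [metricForm, QuadraticMap.prod_apply, QuadraticMap.comp_apply]
    exact (sub_sub_sub_cancel_right _ _ _).trans_le hblock
  · convert h.isMinOn_lam_state hM hα using 3 with x
    · rw [stateSub, QuadraticMap.map_sub, add_sub_right_comm]
      rfl
    · rfl
  · convert h.mu using 3 with y
    · change _ + penaltyForm M α (l - p + y) = _
      rw [show l - p + y = y - (p - l) by abel]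
      rfl
    · exact (penaltyForm_sub _ _ _ _).symm
    · rfl

end SGSStep

section Convergence

variable {N : ℕ} {K M W : Matrix (Fin N) (Fin N) ℝ} {γ α a b : ℝ} {yd yr : Fin N → ℝ}
  {C : Set (Fin N → ℝ)}

theorem metricForm_apply_of_isSymm (hK : K.IsSymm)
    (z : ((Fin N → ℝ) × (Fin N → ℝ)) × (Fin N → ℝ)) :
    metricForm K M W γ α z
      = (1 / (2 * α)) * (z.1.1 ⬝ᵥ ((M * (M + α • (K * M⁻¹ * K))⁻¹ * M + W - M) *ᵥ z.1.1))
        + (1 / (2 * α)) * (γ * (z.2 ⬝ᵥ ((M * W⁻¹ * M) *ᵥ z.2))) := by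
  simp only [metricForm, QuadraticMap.prod_apply, QuadraticMap.comp_apply, penaltyForm_apply,
    LinearMap.fst_apply, lamWeight, stateMatrix, muWeight, hK.eq, smul_mulVec, dotProduct_smul,
    smul_eq_mul]

theorem metricForm_nonneg (hM : M.PosDef) (hW : W.PosDef) (hγ : 0 < γ) (hα : 0 < α)
    (hMW : ∀ x, x ⬝ᵥ (M *ᵥ x) ≤ x ⬝ᵥ (W *ᵥ x))
    (hWM : ∀ x, x ⬝ᵥ (W *ᵥ x) ≤ γ * (x ⬝ᵥ (M *ᵥ x)))
    (z : ((Fin N → ℝ) × (Fin N → ℝ)) × (Fin N → ℝ)) : 0 ≤ metricForm K M W γ α z :=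
  add_nonneg ((lamWeight_penaltyForm_posDef hM hα hMW).nonneg _)
    ((muWeight_penaltyForm_posDef hM hW hγ hα hWM).nonneg _)

theorem exists_norm_le_of_metricForm_le (hM : M.PosDef) (hW : W.PosDef) (hγ : 0 < γ) (hα : 0 < α)
    (hMW : ∀ x, x ⬝ᵥ (M *ᵥ x) ≤ x ⬝ᵥ (W *ᵥ x))
    (hWM : ∀ x, x ⬝ᵥ (W *ᵥ x) ≤ γ * (x ⬝ᵥ (M *ᵥ x)))
    (w : ((Fin N → ℝ) × (Fin N → ℝ)) × (Fin N → ℝ)) (c : ℝ) :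
    ∃ R, ∀ z, metricForm K M W γ α (z - w) ≤ c → ‖z.1.1‖ ≤ R ∧ ‖z.2‖ ≤ R := by
  have hlampos := lamWeight_penaltyForm_posDef (K := K) hM hα hMW
  have hmupos := muWeight_penaltyForm_posDef hM hW hγ hα hWM
  obtain ⟨Rl, hRl⟩ := (isBounded_quadraticForm_sublevel hlampos w.1.1 c).exists_norm_le
  obtain ⟨Rm, hRm⟩ := (isBounded_quadraticForm_sublevel hmupos w.2 c).exists_norm_le
  refine ⟨max Rl Rm, fun z hz ↦ ⟨(hRl _ ?_).trans (le_max_left _ _),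
    (hRm _ ?_).trans (le_max_right _ _)⟩⟩
  · exact (le_add_of_nonneg_right (hmupos.nonneg _)).trans hz
  · exact (le_add_of_nonneg_left (hlampos.nonneg _)).trans hz

theorem exists_norm_add_le_of_isMinOn_stateSub (hM : M.PosDef) (hα : 0 < α)
    {t : ℕ → ℝ} (ht : IsNesterovSeq t) {lam p mu muE : ℕ → Fin N → ℝ}
    (hmuE : IsExtrapolated t mu muE)
    (hp : ∀ k ≥ 1, IsMinOn (stateSub K M α yd yr (lam k + muE k)) univ (p k)) {R : ℝ}
    (hR : ∀ k, ‖lam k‖ ≤ R ∧ ‖mu k‖ ≤ R) : ∃ R, ∀ k, ‖lam k‖ + ‖p k‖ + ‖mu k‖ ≤ R := by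
  obtain ⟨Rp, hRp⟩ := exists_norm_le_of_isMinOn_stateSub (K := K) (yd := yd) (yr := yr) hM hα
    (R + 3 * R)
  have hpbound : ∀ k, ‖p k‖ ≤ max ‖p 0‖ Rp := by
    rintro (_ | k)
    · exact le_max_left _ _
    · have hv : ‖lam (k + 1) + muE (k + 1)‖ ≤ R + 3 * R := norm_add_le_of_le (hR _).1
        (hmuE.norm_le ht (fun k ↦ (hR k).2) (Nat.le_add_left 1 k))
      exact (hRp _ hv _ (hp _ (Nat.le_add_left 1 k))).trans (le_max_right _ _)
  exact ⟨R + max ‖p 0‖ Rp + R, fun k ↦ add_le_add_three (hR k).1 (hpbound k) (hR k).2⟩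

theorem sGS_mABCD_convergence_discretized_general (hM : M.PosDef) (hW : W.PosDef) (hγ : 0 < γ)
    (hMW : ∀ x, x ⬝ᵥ (M *ᵥ x) ≤ x ⬝ᵥ (W *ᵥ x))
    (hWM : ∀ x, x ⬝ᵥ (W *ᵥ x) ≤ γ * (x ⬝ᵥ (M *ᵥ x)))
    (hα : 0 < α) (hC : Convex ℝ C)
    {lam p mu phat lamE pE muE : ℕ → Fin N → ℝ} {t : ℕ → ℝ} (ht : IsNesterovSeq t)
    (hlamE : IsExtrapolated t lam lamE) (hpE : IsExtrapolated t p pE)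
    (hmuE : IsExtrapolated t mu muE)
    (hstep : ∀ k ≥ 1, IsSGSStep K M W γ α a b yd yr C
      (lamE k) (muE k) (phat k) (lam k) (p k) (mu k))
    {lams ps mus : Fin N → ℝ} (hlams : lams ∈ C) :
    (∀ k ≥ 1,
      discDualObj K M α a b yd yr (lam k) (p k) (mu k) - discDualObj K M α a b yd yr lams ps mus
        ≤ 4 * metricForm K M W γ α (((lam 0, p 0), mu 0) - ((lams, ps), mus))
          / ((k : ℝ) + 1) ^ 2) ∧
    ((∀ l ∈ C, ∀ q m,
        discDualObj K M α a b yd yr lams ps mus ≤ discDualObj K M α a b yd yr l q m) →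
      ∃ R, ∀ k, ‖lam k‖ + ‖p k‖ + ‖mu k‖ ≤ R) := by
  have hextr := (hlamE.prodMk hpE).prodMk hmuE
  have hnonneg := metricForm_nonneg (K := K) hM hW hγ hα hMW hWM
  have hfeas : ∀ k ≥ 1, ((lam k, p k), mu k) ∈
      {z : ((Fin N → ℝ) × (Fin N → ℝ)) × (Fin N → ℝ) | z.1.1 ∈ C} := fun k hk ↦
    (hstep k hk).lam_mem
  have hdescent := fun k hk w hw ↦
    (hstep k hk).blockObj_sub_le hM hW hγ hα hC hMW hWM (pE k) (z := w) hw
  refine ⟨fun k hk ↦ nesterov_rate (z := ((lams, ps), mus)) ht hextr hnonneg hfeas hdescent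
    hlams hk, fun hmin ↦ ?_⟩
  have hdist := nesterov_dist_le (z := ((lams, ps), mus)) ht hextr hnonneg hfeas hdescent hlams
    (isMinOn_iff.mpr fun w hw ↦ hmin _ hw _ _)
  obtain ⟨R, hR⟩ := exists_norm_le_of_metricForm_le hM hW hγ hα hMW hWM ((lams, ps), mus) _
  exact exists_norm_add_le_of_isMinOn_stateSub hM hα ht hmuE (fun k hk ↦ (hstep k hk).state)
    fun k ↦ hR _ (hdist k)

end Convergence

theorem convex_setOf_forall_abs_le {ι : Type*} (β : ℝ) :
    Convex ℝ {x : ι → ℝ | ∀ i, |x i| ≤ β} := by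
  have hbox : {x : ι → ℝ | ∀ i, |x i| ≤ β} = Icc (fun _ ↦ -β) (fun _ ↦ β) := by
    simp only [abs_le, forall_and]
    rfl
  rw [hbox]
  exact convex_Icc _ _

/-- Convergence and boundedness theorem for the finite-element-discretized sGS-majorized
ABCD algorithm applied to the finite-dimensional dual problem `(D_h)`: the objective gap
decays like `4 τ_h / (k+1)²` and the iterate sequence is bounded. -/
theorem sGS_mABCD_convergence_discretized
    (N : ℕ) (K M W : Matrix (Fin N) (Fin N) ℝ)
    (hKsymm : K.IsSymm) (hKpsd : K.PosSemidef)
    (hMsymm : M.IsSymm) (hMpd : M.PosDef)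
    (hWdiag : W.IsDiag) (hWpd : W.PosDef)
    (γ : ℝ) (hγ : 1 ≤ γ)
    (hMW : ∀ x : Fin N → ℝ, x ⬝ᵥ (M *ᵥ x) ≤ x ⬝ᵥ (W *ᵥ x))
    (hWM : ∀ x : Fin N → ℝ, x ⬝ᵥ (W *ᵥ x) ≤ γ * (x ⬝ᵥ (M *ᵥ x)))
    (α β a b : ℝ) (hα : 0 < α) (hβ : 0 < β) (ha : a ≤ 0) (hb : 0 ≤ b)
    (yd yr : Fin N → ℝ)
    -- iterates and extrapolated points
    (lam p mu phat lamE pE muE : ℕ → Fin N → ℝ) (t : ℕ → ℝ)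
    (ht1 : t 1 = 1)
    (htrec : ∀ k ≥ 1, t (k + 1) = (1 + Real.sqrt (1 + 4 * t k ^ 2)) / 2)
    (hinit : lamE 1 = lam 0 ∧ pE 1 = p 0 ∧ muE 1 = mu 0 ∧ ∀ i, |lam 0 i| ≤ β)
    (hphat : ∀ k ≥ 1, ∀ q : Fin N → ℝ,
      (1 / 2) * ((K *ᵥ phat k - M *ᵥ yd) ⬝ᵥ (M⁻¹ *ᵥ (K *ᵥ phat k - M *ᵥ yd)))
          + (1 / (2 * α)) * ((phat k - lamE k - muE k) ⬝ᵥ (M *ᵥ (phat k - lamE k - muE k)))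
          + (M *ᵥ yr) ⬝ᵥ phat k
        ≤ (1 / 2) * ((K *ᵥ q - M *ᵥ yd) ⬝ᵥ (M⁻¹ *ᵥ (K *ᵥ q - M *ᵥ yd)))
          + (1 / (2 * α)) * ((q - lamE k - muE k) ⬝ᵥ (M *ᵥ (q - lamE k - muE k)))
          + (M *ᵥ yr) ⬝ᵥ q)
    (hlam : ∀ k ≥ 1, (∀ i, |lam k i| ≤ β) ∧ ∀ l : Fin N → ℝ, (∀ i, |l i| ≤ β) →
      (1 / (2 * α)) * ((lam k - (phat k - muE k)) ⬝ᵥ (M *ᵥ (lam k - (phat k - muE k))))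
          + (1 / (2 * α)) * ((lam k - lamE k) ⬝ᵥ ((W - M) *ᵥ (lam k - lamE k)))
        ≤ (1 / (2 * α)) * ((l - (phat k - muE k)) ⬝ᵥ (M *ᵥ (l - (phat k - muE k))))
          + (1 / (2 * α)) * ((l - lamE k) ⬝ᵥ ((W - M) *ᵥ (l - lamE k))))
    (hp : ∀ k ≥ 1, ∀ q : Fin N → ℝ,
      (1 / 2) * ((K *ᵥ p k - M *ᵥ yd) ⬝ᵥ (M⁻¹ *ᵥ (K *ᵥ p k - M *ᵥ yd)))
          + (1 / (2 * α)) * ((p k - lam k - muE k) ⬝ᵥ (M *ᵥ (p k - lam k - muE k)))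
          + (M *ᵥ yr) ⬝ᵥ p k
        ≤ (1 / 2) * ((K *ᵥ q - M *ᵥ yd) ⬝ᵥ (M⁻¹ *ᵥ (K *ᵥ q - M *ᵥ yd)))
          + (1 / (2 * α)) * ((q - lam k - muE k) ⬝ᵥ (M *ᵥ (q - lam k - muE k)))
          + (M *ᵥ yr) ⬝ᵥ q)
    (hmu : ∀ k ≥ 1, ∀ m : Fin N → ℝ,
      boxSupport a b (M *ᵥ mu k)
          + (1 / (2 * α)) * ((mu k - (p k - lam k)) ⬝ᵥ (M *ᵥ (mu k - (p k - lam k))))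
          + (1 / (2 * α)) * ((mu k - muE k) ⬝ᵥ
              ((γ • (M * W⁻¹ * M) - M) *ᵥ (mu k - muE k)))
        ≤ boxSupport a b (M *ᵥ m)
          + (1 / (2 * α)) * ((m - (p k - lam k)) ⬝ᵥ (M *ᵥ (m - (p k - lam k))))
          + (1 / (2 * α)) * ((m - muE k) ⬝ᵥ ((γ • (M * W⁻¹ * M) - M) *ᵥ (m - muE k))))
    (hextr : ∀ k ≥ 1,
      lamE (k + 1) = lam k + ((t k - 1) / t (k + 1)) • (lam k - lam (k - 1)) ∧
      pE (k + 1) = p k + ((t k - 1) / t (k + 1)) • (p k - p (k - 1)) ∧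
      muE (k + 1) = mu k + ((t k - 1) / t (k + 1)) • (mu k - mu (k - 1)))
    -- a minimizer of `Φ_h`
    (lams ps mus : Fin N → ℝ) (hlams : ∀ i, |lams i| ≤ β)
    (hmin : ∀ l : Fin N → ℝ, (∀ i, |l i| ≤ β) → ∀ q m : Fin N → ℝ,
      discDualObj K M α a b yd yr lams ps mus ≤ discDualObj K M α a b yd yr l q m) :
    (∀ k ≥ 1,
      discDualObj K M α a b yd yr (lam k) (p k) (mu k)
          - discDualObj K M α a b yd yr lams ps mus
        ≤ 4 * ((1 / (2 * α)) * ((lam 0 - lams) ⬝ᵥ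
                ((M * (M + α • (K * M⁻¹ * K))⁻¹ * M + W - M) *ᵥ (lam 0 - lams)))
              + (1 / (2 * α)) * (γ * ((mu 0 - mus) ⬝ᵥ ((M * W⁻¹ * M) *ᵥ (mu 0 - mus)))))
            / ((k : ℝ) + 1) ^ 2) ∧
    ∃ R : ℝ, ∀ k : ℕ, ‖lam k‖ + ‖p k‖ + ‖mu k‖ ≤ R := by
  have hstep : ∀ k ≥ 1, IsSGSStep K M W γ α a b yd yr {l | ∀ i, |l i| ≤ β}
      (lamE k) (muE k) (phat k) (lam k) (p k) (mu k) := fun k hk ↦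
    { predictor := isMinOn_univ_iff.mpr fun q ↦ by
        simpa only [stateSub, stateObj, penaltyForm_apply, sub_sub, add_right_comm]
          using hphat k hk q
      lam_mem := (hlam k hk).1
      lam := isMinOn_iff.mpr fun l hl ↦ by
        simpa only [penaltyForm_apply] using (hlam k hk).2 l hl
      state := isMinOn_univ_iff.mpr fun q ↦ by
        simpa only [stateSub, stateObj, penaltyForm_apply, sub_sub, add_right_comm]
          using hp k hk q
      mu := isMinOn_univ_iff.mpr fun m ↦ by
        simpa only [penaltyForm_apply, muWeight] using hmu k hk m }
  obtain ⟨hrate, hbounded⟩ := sGS_mABCD_convergence_discretized_general hMpd hWpd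
    (zero_lt_one.trans_le hγ) hMW hWM hα (convex_setOf_forall_abs_le β) ⟨ht1, htrec⟩
    ⟨hinit.1, fun k hk ↦ (hextr k hk).1⟩ ⟨hinit.2.1, fun k hk ↦ (hextr k hk).2.1⟩
    ⟨hinit.2.2.1, fun k hk ↦ (hextr k hk).2.2⟩ hstep (ps := ps) (mus := mus) hlams
  exact ⟨fun k hk ↦ (hrate k hk).trans_eq (by rw [metricForm_apply_of_isSymm hKsymm]; rfl),
    hbounded hmin⟩
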